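/- Let p ∈ Δ*_m, q ∈ Δ*_n, c ∈ ℝ^{m×n}, and let α > 0, β > 0. Let π^onl be any minimizer over C_β ∩ Γ(*,q) of α⟨c,π⟩ + KL(π𝟙|p), and let π^reg be the unique minimizer over Γ(*,q) of F^reg(π) = ⟨c,π⟩ + (1/α) KL(π𝟙|p) + (1/β) KL(π|π^ref). Then KL(π^onl 𝟙 | π^reg 𝟙) ≤ (α/β) log(mn). -/

import Mathlib

open Finset Filter Topology ENNReal

noncomputable section

/-- Frobenius inner product `⟨c, π⟩ = ∑_{ij} c_ij π_ij`. -/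
def frob {m n : ℕ} (c π : Matrix (Fin m) (Fin n) ℝ) : ℝ := ∑ i, ∑ j, c i j * π i j

/-- Row sums `π𝟙`. -/
def rowSum {m n : ℕ} (π : Matrix (Fin m) (Fin n) ℝ) : Fin m → ℝ := fun i => ∑ j, π i j

/-- Column sums `πᵀ𝟙`. -/
def colSum {m n : ℕ} (π : Matrix (Fin m) (Fin n) ℝ) : Fin n → ℝ := fun j => ∑ i, π i j

/-- Kullback–Leibler divergence between nonnegative vectors. -/
def KLvec {k : ℕ} (a b : Fin k → ℝ) : ℝ := ∑ i, (a i * Real.log (a i / b i) - a i + b i)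

/-- Kullback–Leibler divergence between nonnegative matrices. -/
def KLmat {m n : ℕ} (a b : Matrix (Fin m) (Fin n) ℝ) : ℝ :=
  ∑ i, ∑ j, (a i j * Real.log (a i j / b i j) - a i j + b i j)

/-- The tipless simplex `Δ*_k`: strictly positive entries summing to 1. -/
def simplexPos (k : ℕ) : Set (Fin k → ℝ) := {p | (∀ i, 0 < p i) ∧ ∑ i, p i = 1}

/-- The simplex `Δ_k`: nonnegative entries summing to 1. -/
def simplexNN (k : ℕ) : Set (Fin k → ℝ) := {p | (∀ i, 0 ≤ p i) ∧ ∑ i, p i = 1}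

/-- Transport plans `Γ(p, q)`. -/
def Gamma {m n : ℕ} (p : Fin m → ℝ) (q : Fin n → ℝ) : Set (Matrix (Fin m) (Fin n) ℝ) :=
  {π | (∀ i j, 0 ≤ π i j) ∧ rowSum π = p ∧ colSum π = q}

/-- Half-relaxed plans `Γ(*, q)`. -/
def GammaStar {m n : ℕ} (q : Fin n → ℝ) : Set (Matrix (Fin m) (Fin n) ℝ) :=
  {π | (∀ i j, 0 ≤ π i j) ∧ colSum π = q}

/-- Reference plan `π^ref = (mn)⁻¹ 𝟙𝟙ᵀ`. -/
def piRef (m n : ℕ) : Matrix (Fin m) (Fin n) ℝ := fun _ _ => 1 / (m * n)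

/-- Optimal transport value `OT(p,q)`. -/
def OTval {m n : ℕ} (c : Matrix (Fin m) (Fin n) ℝ) (p : Fin m → ℝ) (q : Fin n → ℝ) : ℝ :=
  ⨅ π : Gamma p q, frob c π.1

/-- Entropic OT objective `⟨c,π⟩ + β⁻¹ KL(π|π^ref)`. -/
def eotObj {m n : ℕ} (c : Matrix (Fin m) (Fin n) ℝ) (β : ℝ) (π : Matrix (Fin m) (Fin n) ℝ) : ℝ :=
  frob c π + β⁻¹ * KLmat π (piRef m n)

/-- Entropic OT value `EOT_β(p,q)`. -/
def eotVal {m n : ℕ} (c : Matrix (Fin m) (Fin n) ℝ) (β : ℝ) (p : Fin m → ℝ) (q : Fin n → ℝ) : ℝ :=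
  ⨅ π : Gamma p q, eotObj c β π.1

/-- Gibbs kernel `K = e^{-βc}` (entrywise). -/
def gibbs {m n : ℕ} (c : Matrix (Fin m) (Fin n) ℝ) (β : ℝ) : Matrix (Fin m) (Fin n) ℝ :=
  fun i j => Real.exp (-(β * c i j))

/-- Annealed Sinkhorn scaling vectors `(a_t, b_t)`:
`b_0 = 𝟙`, `a_{t+1} = p ⊘ (K_t b_t)`, `b_{t+1} = q ⊘ (K_{t+1}ᵀ a_{t+1})`, `K_t = e^{-β_t c}`. -/
def sinkAB {m n : ℕ} (p : Fin m → ℝ) (q : Fin n → ℝ) (c : Matrix (Fin m) (Fin n) ℝ)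
    (β : ℕ → ℝ) : ℕ → (Fin m → ℝ) × (Fin n → ℝ)
  | 0 => (fun _ => 1, fun _ => 1)
  | t + 1 =>
    let prev := sinkAB p q c β t
    let a : Fin m → ℝ := fun i => p i / ∑ j, gibbs c (β t) i j * prev.2 j
    (a, fun j => q j / ∑ i, gibbs c (β (t + 1)) i j * a i)

/-- Annealed Sinkhorn primal iterate `π_t = diag(a_t) K_t diag(b_t)`. -/
def sinkPlan {m n : ℕ} (p : Fin m → ℝ) (q : Fin n → ℝ) (c : Matrix (Fin m) (Fin n) ℝ)
    (β : ℕ → ℝ) (t : ℕ) : Matrix (Fin m) (Fin n) ℝ :=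
  fun i j => (sinkAB p q c β t).1 i * gibbs c (β t) i j * (sinkAB p q c β t).2 j

/-- `ℓ¹` norm of a vector. -/
def l1vec {k : ℕ} (a : Fin k → ℝ) : ℝ := ∑ i, |a i|

/-- Oscillation semi-norm `‖c‖_osc = max c - min c`. -/
def cOsc {m n : ℕ} (c : Matrix (Fin m) (Fin n) ℝ) : ℝ :=
  (⨆ i, ⨆ j, c i j) - ⨅ i, ⨅ j, c i j

/-- `‖log p‖_∞`. -/
def logSup {k : ℕ} (p : Fin k → ℝ) : ℝ := ⨆ i, |Real.log (p i)|

/-- The rounding ("projection") procedure of Altschuler et al. (Algorithm 3). -/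
def roundPlan {m n : ℕ} (p : Fin m → ℝ) (q : Fin n → ℝ) (π : Matrix (Fin m) (Fin n) ℝ) :
    Matrix (Fin m) (Fin n) ℝ :=
  let π' : Matrix (Fin m) (Fin n) ℝ := fun i j => min 1 (p i / rowSum π i) * π i j
  let π'' : Matrix (Fin m) (Fin n) ℝ := fun i j => π' i j * min 1 (q j / colSum π' j)
  fun i j => π'' i j +
    (p i - rowSum π'' i) * (q j - colSum π'' j) / l1vec (fun i' => p i' - rowSum π'' i')

/-- Relaxed entropic objective `F^reg(π) = ⟨c,π⟩ + α⁻¹ KL(π𝟙|p) + β⁻¹ KL(π|π^ref)`. -/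
def Freg {m n : ℕ} (c : Matrix (Fin m) (Fin n) ℝ) (p : Fin m → ℝ) (α β : ℝ)
    (π : Matrix (Fin m) (Fin n) ℝ) : ℝ :=
  frob c π + α⁻¹ * KLvec (rowSum π) p + β⁻¹ * KLmat π (piRef m n)

/-- Dual functional for the relaxed entropic problem. -/
def dualFun {m n : ℕ} (p : Fin m → ℝ) (q : Fin n → ℝ) (c : Matrix (Fin m) (Fin n) ℝ)
    (α β : ℝ) (u : Fin m → ℝ) (v : Fin n → ℝ) : ℝ :=
  α⁻¹ * (∑ i, (1 - Real.exp (-(α * u i))) * p i) + ∑ j, v j * q j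
    - β⁻¹ * (∑ i, ∑ j, Real.exp (β * (u i + v j - c i j)) * piRef m n i j) + β⁻¹

/-- Dual functional of entropic OT. -/
def eotDual {m n : ℕ} (p : Fin m → ℝ) (q : Fin n → ℝ) (c : Matrix (Fin m) (Fin n) ℝ)
    (β : ℝ) (u : Fin m → ℝ) (v : Fin n → ℝ) : ℝ :=
  ∑ i, p i * u i + ∑ j, q j * v j
    + β⁻¹ * (1 - ∑ i, ∑ j, piRef m n i j * Real.exp (β * (u i + v j - c i j)))

/-- The set `C_β` of plans of the form `diag(a) e^{-βc} diag(b)` with `a, b ≥ 0`. -/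
def scalingSet {m n : ℕ} (c : Matrix (Fin m) (Fin n) ℝ) (β : ℝ) :
    Set (Matrix (Fin m) (Fin n) ℝ) :=
  {π | ∃ a : Fin m → ℝ, ∃ b : Fin n → ℝ, (∀ i, 0 ≤ a i) ∧ (∀ j, 0 ≤ b j) ∧
    π = fun i j => a i * Real.exp (-(β * c i j)) * b j}

/-! Write `G π = α⟨c, π⟩ + KL(π𝟙 | p)`, so that `α F^reg(π) = G π + (α/β) KL(π | π^ref)`. The
entropy forces `π^reg` to charge every entry that some competitor charges, so first-order optimality
holds as an equality: the gradient of `F^reg` at `π^reg` is orthogonal to every direction with zero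
column sums supported where `π^reg` is. Applied to transfers between two entries of one column, this
makes the gradient constant along columns, which puts `π^reg` in `C_β`, whence `G π^onl ≤ G π^reg`.
Applied to `π^onl - π^reg`, it turns the Bregman expansion of `F^reg` into the Pythagorean identity
`F^reg(π^onl) = F^reg(π^reg) + α⁻¹ KL(π^onl 𝟙 | π^reg 𝟙) + β⁻¹ KL(π^onl | π^reg)`. Together they
bound `KL(π^onl 𝟙 | π^reg 𝟙)` by `(α/β) (KL(π^onl | π^ref) - KL(π^reg | π^ref))`, a difference of
entropies. -/

/-- The summand `a log (a / b) - a + b` of the Kullback–Leibler divergences `KLvec` and `KLmat`. -/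
def klTerm (a b : ℝ) : ℝ := a * Real.log (a / b) - a + b

lemma klTerm_eq_mul_klFun {b : ℝ} (a : ℝ) (hb : b ≠ 0) :
    klTerm a b = b * InformationTheory.klFun (a / b) := by
  simp only [klTerm, InformationTheory.klFun_apply]
  field_simp
  ring

lemma klTerm_nonneg {a b : ℝ} (ha : 0 ≤ a) (hb : 0 ≤ b) (h : b = 0 → a = 0) :
    0 ≤ klTerm a b := by
  rcases eq_or_ne b 0 with hb0 | hb0
  · simp [klTerm, hb0, h hb0]
  · rw [klTerm_eq_mul_klFun a hb0]
    exact mul_nonneg hb (InformationTheory.klFun_nonneg (div_nonneg ha hb))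

lemma convexOn_klTerm {b : ℝ} (hb : 0 < b) : ConvexOn ℝ (Set.Ici 0) fun a => klTerm a b := by
  have h : ConvexOn ℝ (Set.Ici 0) fun a : ℝ => InformationTheory.klFun (b⁻¹ * a) :=
    (InformationTheory.convexOn_klFun.comp_linearMap (LinearMap.mul ℝ ℝ b⁻¹)).subset
      (fun a (ha : 0 ≤ a) => show 0 ≤ b⁻¹ * a by positivity) (convex_Ici 0)
  refine (h.smul hb.le).congr fun a _ => ?_
  simp [klTerm_eq_mul_klFun a hb.ne', div_eq_inv_mul]

lemma klTerm_convexCombo_le {x s b t : ℝ} (hx : 0 ≤ x) (hs : 0 ≤ s) (hb : 0 < b)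
    (ht : 0 < t) (ht1 : t ≤ 1) :
    klTerm ((1 - t) * x + t * s) b ≤
      (1 - t) * klTerm x b + t * klTerm s b + t * Real.log t * if x = 0 then s else 0 := by
  split_ifs with h
  · rcases eq_or_ne s 0 with rfl | hs0
    · simp only [h, klTerm, mul_zero, zero_mul, add_zero, sub_zero, zero_add]
      exact le_of_eq (by ring)
    · have hlog : Real.log (t * s / b) = Real.log t + Real.log (s / b) := by
        rw [mul_div_assoc, Real.log_mul ht.ne' (div_ne_zero hs0 hb.ne')]
      simp only [h, klTerm, mul_zero, zero_add, zero_mul, hlog]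
      exact le_of_eq (by ring)
  · simpa using (convexOn_klTerm hb).2 hx hs (sub_nonneg.2 ht1) ht.le (sub_add_cancel 1 t)

lemma klTerm_eq_add_klTerm {s x b : ℝ} (hb : b ≠ 0) (h : x = 0 → s = 0) :
    klTerm s b = klTerm x b + Real.log (x / b) * (s - x) + klTerm s x := by
  simp only [klTerm]
  rcases eq_or_ne s 0 with rfl | hs
  · simp only [zero_mul, zero_sub, neg_zero, zero_add]
    ring
  · have hx : x ≠ 0 := mt h hs
    rw [Real.log_div hs hb, Real.log_div hx hb, Real.log_div hs hx]
    ring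

lemma hasDerivAt_klTerm_line {x d b : ℝ} (hb : b ≠ 0) (h : x = 0 → d = 0) :
    HasDerivAt (fun t => klTerm (x + t * d) b) (Real.log (x / b) * d) 0 := by
  rcases eq_or_ne x 0 with hx | hx
  · simpa [hx, h hx] using hasDerivAt_const (0 : ℝ) (klTerm 0 b)
  · have hline : HasDerivAt (fun t : ℝ => (x + t * d) / b) (d / b) 0 := by
      simpa using (((hasDerivAt_id (0 : ℝ)).mul_const d).const_add x).div_const b
    have hkl := (InformationTheory.hasDerivAt_klFun
      (x := (x + 0 * d) / b) (by simpa using ⟨hx, hb⟩)).comp (0 : ℝ) hline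
    rw [funext fun t => klTerm_eq_mul_klFun (x + t * d) hb]
    refine (hkl.const_mul b).congr_deriv ?_
    rw [zero_mul, add_zero]
    field_simp

section Vector

variable {k : ℕ} {a b d s x : Fin k → ℝ}

lemma KLvec_eq_sum_klTerm (a b : Fin k → ℝ) : KLvec a b = ∑ i, klTerm (a i) (b i) := rfl

lemma KLvec_nonneg (ha : ∀ i, 0 ≤ a i) (hb : ∀ i, 0 ≤ b i) (h : ∀ i, b i = 0 → a i = 0) :
    0 ≤ KLvec a b :=
  Finset.sum_nonneg fun i _ => klTerm_nonneg (ha i) (hb i) (h i)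

lemma KLvec_convexCombo_le {t : ℝ} (hx : ∀ i, 0 ≤ x i) (hs : ∀ i, 0 ≤ s i) (hb : ∀ i, 0 < b i)
    (ht : 0 < t) (ht1 : t ≤ 1) :
    KLvec ((1 - t) • x + t • s) b ≤ (1 - t) * KLvec x b + t * KLvec s b +
      t * Real.log t * ∑ i, if x i = 0 then s i else 0 := by
  simp only [KLvec_eq_sum_klTerm, Finset.mul_sum, ← Finset.sum_add_distrib]
  exact Finset.sum_le_sum fun i _ => klTerm_convexCombo_le (hx i) (hs i) (hb i) ht ht1

lemma convexOn_KLvec (hb : ∀ i, 0 < b i) :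
    ConvexOn ℝ (Set.Ici 0) fun a => KLvec a b := by
  refine ⟨convex_Ici 0, fun x hx s hs u v hu hv huv => ?_⟩
  simp only [KLvec_eq_sum_klTerm, Finset.smul_sum, ← Finset.sum_add_distrib]
  exact Finset.sum_le_sum fun i _ => (convexOn_klTerm (hb i)).2 (hx i) (hs i) hu hv huv

lemma KLvec_eq_add_KLvec (hb : ∀ i, b i ≠ 0) (h : ∀ i, x i = 0 → s i = 0) :
    KLvec s b = KLvec x b + ∑ i, Real.log (x i / b i) * (s i - x i) + KLvec s x := by
  simp only [KLvec_eq_sum_klTerm, ← Finset.sum_add_distrib]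
  exact Finset.sum_congr rfl fun i _ => klTerm_eq_add_klTerm (hb i) (h i)

lemma hasDerivAt_KLvec_line (hb : ∀ i, b i ≠ 0) (h : ∀ i, x i = 0 → d i = 0) :
    HasDerivAt (fun t : ℝ => KLvec (x + t • d) b) (∑ i, Real.log (x i / b i) * d i) 0 :=
  HasDerivAt.fun_sum fun i _ => hasDerivAt_klTerm_line (hb i) (h i)

end Vector

section Entropy

variable {ι : Type*} {s : Finset ι} {x y : ι → ℝ}

lemma sum_mul_log_le_mul_log_sum (hx : ∀ i ∈ s, 0 ≤ x i) :
    ∑ i ∈ s, x i * Real.log (x i) ≤ (∑ i ∈ s, x i) * Real.log (∑ i ∈ s, x i) := by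
  rw [Finset.sum_mul]
  refine Finset.sum_le_sum fun i hi => ?_
  rcases (hx i hi).eq_or_lt with h | h
  · simp [← h]
  · exact mul_le_mul_of_nonneg_left (Real.log_le_log h (Finset.single_le_sum hx hi)) h.le

lemma mul_log_sum_div_card_le_sum_mul_log (hx : ∀ i ∈ s, 0 ≤ x i) :
    (∑ i ∈ s, x i) * Real.log ((∑ i ∈ s, x i) / #s) ≤ ∑ i ∈ s, x i * Real.log (x i) := by
  rcases s.eq_empty_or_nonempty with rfl | hs
  · simp
  have hcard : (0 : ℝ) < #s := by exact_mod_cast hs.card_pos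
  have jensen := Real.convexOn_mul_log.map_sum_le (t := s) (w := fun _ => (#s : ℝ)⁻¹)
    (fun _ _ => by positivity) (by simp [hcard.ne']) hx
  simp only [smul_eq_mul, ← div_eq_inv_mul, ← Finset.sum_div] at jensen
  rwa [div_mul_eq_mul_div, div_le_div_iff_of_pos_right hcard] at jensen

lemma sum_mul_log_sub_sum_mul_log_le (hx : ∀ i ∈ s, 0 ≤ x i) (hy : ∀ i ∈ s, 0 ≤ y i)
    (hxy : ∑ i ∈ s, x i = ∑ i ∈ s, y i) :
    ∑ i ∈ s, x i * Real.log (x i) - ∑ i ∈ s, y i * Real.log (y i) ≤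
      (∑ i ∈ s, x i) * Real.log #s := by
  have hupper := sum_mul_log_le_mul_log_sum hx
  have hlower := mul_log_sum_div_card_le_sum_mul_log hy
  rw [← hxy] at hlower
  rcases eq_or_ne (∑ i ∈ s, x i) 0 with h | h
  · simp only [h, zero_mul] at hupper hlower ⊢
    linarith
  · have hcard : (#s : ℝ) ≠ 0 := by
      intro hcard
      simp_all
    rw [Real.log_div h hcard] at hlower
    linarith

end Entropy

section Matrix

variable {m n : ℕ} {q : Fin n → ℝ} {π σ D b : Matrix (Fin m) (Fin n) ℝ}

lemma rowSum_eq_mulVec (π : Matrix (Fin m) (Fin n) ℝ) : rowSum π = π.mulVec 1 := by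
  ext i
  simp [rowSum, Matrix.mulVec, dotProduct]

lemma colSum_eq_vecMul (π : Matrix (Fin m) (Fin n) ℝ) : colSum π = Matrix.vecMul 1 π := by
  ext j
  simp [colSum, Matrix.vecMul, dotProduct]

lemma rowSum_add (π σ : Matrix (Fin m) (Fin n) ℝ) : rowSum (π + σ) = rowSum π + rowSum σ := by
  simp only [rowSum_eq_mulVec, Matrix.add_mulVec]

lemma rowSum_sub (π σ : Matrix (Fin m) (Fin n) ℝ) : rowSum (π - σ) = rowSum π - rowSum σ := by
  simp only [rowSum_eq_mulVec, Matrix.sub_mulVec]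

lemma rowSum_smul (t : ℝ) (π : Matrix (Fin m) (Fin n) ℝ) : rowSum (t • π) = t • rowSum π := by
  simp only [rowSum_eq_mulVec, Matrix.smul_mulVec]

lemma colSum_add (π σ : Matrix (Fin m) (Fin n) ℝ) : colSum (π + σ) = colSum π + colSum σ := by
  simp only [colSum_eq_vecMul, Matrix.vecMul_add]

lemma colSum_sub (π σ : Matrix (Fin m) (Fin n) ℝ) : colSum (π - σ) = colSum π - colSum σ := by
  simp only [colSum_eq_vecMul, Matrix.vecMul_sub]

lemma colSum_smul (t : ℝ) (π : Matrix (Fin m) (Fin n) ℝ) : colSum (t • π) = t • colSum π := by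
  simp only [colSum_eq_vecMul, Matrix.vecMul_smul]

lemma colSum_single (i : Fin m) (j : Fin n) (r : ℝ) :
    colSum (Matrix.single i j r) = Pi.single j r := by
  ext l
  simp [colSum, Matrix.single_apply, Pi.single_apply, ite_and, eq_comm]

lemma rowSum_nonneg (hπ : ∀ i j, 0 ≤ π i j) (i : Fin m) : 0 ≤ rowSum π i :=
  Finset.sum_nonneg fun j _ => hπ i j

lemma rowSum_eq_zero_of_support_subset (hπ : ∀ i j, 0 ≤ π i j)
    (hD : ∀ i j, π i j = 0 → D i j = 0) (i : Fin m) (h : rowSum π i = 0) : rowSum D i = 0 :=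
  Finset.sum_eq_zero fun j _ =>
    hD i j ((Finset.sum_eq_zero_iff_of_nonneg fun j _ => hπ i j).1 h j (Finset.mem_univ j))

lemma frob_add (c π σ : Matrix (Fin m) (Fin n) ℝ) : frob c (π + σ) = frob c π + frob c σ := by
  simp only [frob, Matrix.add_apply, mul_add, Finset.sum_add_distrib]

lemma frob_sub (c π σ : Matrix (Fin m) (Fin n) ℝ) : frob c (π - σ) = frob c π - frob c σ := by
  simp only [frob, Matrix.sub_apply, mul_sub, Finset.sum_sub_distrib]

lemma frob_smul (c : Matrix (Fin m) (Fin n) ℝ) (t : ℝ) (π : Matrix (Fin m) (Fin n) ℝ) :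
    frob c (t • π) = t * frob c π := by
  simp only [frob, Matrix.smul_apply, smul_eq_mul, mul_left_comm _ t, ← Finset.mul_sum]

lemma frob_single (c : Matrix (Fin m) (Fin n) ℝ) (i : Fin m) (j : Fin n) (r : ℝ) :
    frob c (Matrix.single i j r) = c i j * r := by
  simp [frob, Matrix.single_apply, ite_and]

lemma piRef_pos (i : Fin m) (j : Fin n) : 0 < piRef m n i j := by
  have hm : (0 : ℝ) < m := by exact_mod_cast i.pos
  have hn : (0 : ℝ) < n := by exact_mod_cast j.pos
  unfold piRef
  positivity

lemma KLmat_eq_sum_KLvec (π b : Matrix (Fin m) (Fin n) ℝ) :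
    KLmat π b = ∑ i, KLvec (π i) (b i) := rfl

lemma KLmat_nonneg (hσ : ∀ i j, 0 ≤ σ i j) (hπ : ∀ i j, 0 ≤ π i j)
    (h : ∀ i j, π i j = 0 → σ i j = 0) : 0 ≤ KLmat σ π :=
  Finset.sum_nonneg fun i _ => KLvec_nonneg (hσ i) (hπ i) (h i)

lemma KLmat_convexCombo_le {t : ℝ} (hπ : ∀ i j, 0 ≤ π i j) (hσ : ∀ i j, 0 ≤ σ i j)
    (hb : ∀ i j, 0 < b i j) (ht : 0 < t) (ht1 : t ≤ 1) :
    KLmat ((1 - t) • π + t • σ) b ≤ (1 - t) * KLmat π b + t * KLmat σ b +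
      t * Real.log t * ∑ i, ∑ j, if π i j = 0 then σ i j else 0 := by
  simp only [KLmat_eq_sum_KLvec]
  rw [Finset.mul_sum, Finset.mul_sum, Finset.mul_sum, ← Finset.sum_add_distrib,
    ← Finset.sum_add_distrib]
  exact Finset.sum_le_sum fun i _ => KLvec_convexCombo_le (hπ i) (hσ i) (hb i) ht ht1

lemma KLmat_eq_add_KLmat (hb : ∀ i j, b i j ≠ 0) (h : ∀ i j, π i j = 0 → σ i j = 0) :
    KLmat σ b = KLmat π b + ∑ i, ∑ j, Real.log (π i j / b i j) * (σ i j - π i j) +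
      KLmat σ π := by
  simp only [KLmat_eq_sum_KLvec, ← Finset.sum_add_distrib]
  exact Finset.sum_congr rfl fun i _ => KLvec_eq_add_KLvec (hb i) (h i)

lemma hasDerivAt_KLmat_line (hb : ∀ i j, b i j ≠ 0) (h : ∀ i j, π i j = 0 → D i j = 0) :
    HasDerivAt (fun t : ℝ => KLmat (π + t • D) b)
      (∑ i, ∑ j, Real.log (π i j / b i j) * D i j) 0 :=
  HasDerivAt.fun_sum fun i _ => hasDerivAt_KLvec_line (hb i) (h i)

lemma sum_sum_eq_of_mem_GammaStar (hπ : π ∈ GammaStar q) : ∑ i, ∑ j, π i j = ∑ j, q j :=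
  (Finset.sum_comm (f := fun i j => π i j)).trans
    (Finset.sum_congr rfl fun j _ => congrFun hπ.2 j)

lemma convex_GammaStar (q : Fin n → ℝ) : Convex ℝ (GammaStar (m := m) q) := by
  rintro π ⟨hπ, hπq⟩ σ ⟨hσ, hσq⟩ u v hu hv huv
  refine ⟨fun i j => add_nonneg (mul_nonneg hu (hπ i j)) (mul_nonneg hv (hσ i j)), ?_⟩
  rw [colSum_add, colSum_smul, colSum_smul, hπq, hσq, Convex.combo_self huv]

lemma submatrix_mem_GammaStar (hπ : π ∈ GammaStar q) (e : Equiv.Perm (Fin m)) :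
    π.submatrix e id ∈ GammaStar q := by
  refine ⟨fun i j => hπ.1 (e i) j, ?_⟩
  rw [← hπ.2]
  exact funext fun j => Equiv.sum_comp e fun i => π i j

lemma eventually_add_smul_mem_GammaStar (hπ : π ∈ GammaStar q)
    (hD : ∀ i j, π i j = 0 → D i j = 0) (hcol : colSum D = 0) :
    ∀ᶠ t : ℝ in 𝓝 0, π + t • D ∈ GammaStar q := by
  have hnonneg : ∀ᶠ t : ℝ in 𝓝 0, ∀ i j, 0 ≤ π i j + t * D i j := by
    refine eventually_all.2 fun i => eventually_all.2 fun j => ?_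
    rcases (hπ.1 i j).eq_or_lt with h | h
    · simp [← h, hD i j h.symm]
    · have hcont : ContinuousAt (fun t : ℝ => π i j + t * D i j) 0 := by fun_prop
      filter_upwards [hcont.eventually_const_lt (by simpa using h)] with t ht using ht.le
  filter_upwards [hnonneg] with t ht
  refine ⟨ht, ?_⟩
  rw [colSum_add, colSum_smul, hcol, smul_zero, add_zero, hπ.2]

lemma KLmat_piRef_sub_KLmat_piRef_le (hσ : σ ∈ GammaStar q) (hπ : π ∈ GammaStar q) :
    KLmat σ (piRef m n) - KLmat π (piRef m n) ≤ (∑ j, q j) * Real.log (m * n) := by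
  have hterm (a : ℝ) (i : Fin m) (j : Fin n) : klTerm a (piRef m n i j) =
      a * Real.log a + (Real.log (m * n) - 1) * a + piRef m n i j := by
    have hmn : (m * n : ℝ) ≠ 0 := (one_div_pos.1 (piRef_pos i j)).ne'
    rcases eq_or_ne a 0 with rfl | ha
    · simp [klTerm]
    · simp only [klTerm, piRef, div_div_eq_mul_div, div_one, Real.log_mul ha hmn]
      ring
  have hentropy := sum_mul_log_sub_sum_mul_log_le (s := Finset.univ)
    (x := fun e : Fin m × Fin n => σ e.1 e.2) (y := fun e => π e.1 e.2)
    (fun e _ => hσ.1 e.1 e.2) (fun e _ => hπ.1 e.1 e.2)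
    (by rw [Fintype.sum_prod_type, Fintype.sum_prod_type, sum_sum_eq_of_mem_GammaStar hσ,
      sum_sum_eq_of_mem_GammaStar hπ])
  simp only [Fintype.sum_prod_type, sum_sum_eq_of_mem_GammaStar hσ, Finset.card_univ,
    Fintype.card_prod, Fintype.card_fin, Nat.cast_mul] at hentropy
  simp only [KLmat_eq_sum_KLvec, KLvec_eq_sum_klTerm, hterm, Finset.sum_add_distrib,
    ← Finset.mul_sum, sum_sum_eq_of_mem_GammaStar hσ, sum_sum_eq_of_mem_GammaStar hπ]
  linarith

end Matrix

section RegularizedObjective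

variable {m n : ℕ} {p : Fin m → ℝ} {q : Fin n → ℝ} {c : Matrix (Fin m) (Fin n) ℝ} {α β : ℝ}
  {π σ D : Matrix (Fin m) (Fin n) ℝ}

/-- The gradient of `Freg c p α β` at `π`, as a matrix paired with directions through `frob`. An
entry is meaningful only where `π` does not vanish, since `Real.log 0 = 0`. -/
def gradFreg (c : Matrix (Fin m) (Fin n) ℝ) (p : Fin m → ℝ) (α β : ℝ)
    (π : Matrix (Fin m) (Fin n) ℝ) : Matrix (Fin m) (Fin n) ℝ :=
  fun i j => c i j + α⁻¹ * Real.log (rowSum π i / p i) + β⁻¹ * Real.log (π i j / piRef m n i j)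

lemma frob_gradFreg (c : Matrix (Fin m) (Fin n) ℝ) (p : Fin m → ℝ) (α β : ℝ)
    (π D : Matrix (Fin m) (Fin n) ℝ) :
    frob (gradFreg c p α β π) D = frob c D
      + α⁻¹ * ∑ i, Real.log (rowSum π i / p i) * rowSum D i
      + β⁻¹ * ∑ i, ∑ j, Real.log (π i j / piRef m n i j) * D i j := by
  simp only [frob, gradFreg, rowSum, Finset.mul_sum, ← Finset.sum_add_distrib]
  refine Finset.sum_congr rfl fun i _ => Finset.sum_congr rfl fun j _ => ?_
  ring

lemma Freg_eq_add_KL (hp : ∀ i, p i ≠ 0) (hπ : ∀ i j, 0 ≤ π i j)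
    (hσ : ∀ i j, π i j = 0 → σ i j = 0) :
    Freg c p α β σ = Freg c p α β π + frob (gradFreg c p α β π) (σ - π)
      + α⁻¹ * KLvec (rowSum σ) (rowSum π) + β⁻¹ * KLmat σ π := by
  have hrow := KLvec_eq_add_KLvec hp (rowSum_eq_zero_of_support_subset hπ hσ)
  have hmat := KLmat_eq_add_KLmat (fun i j => (piRef_pos i j).ne') hσ
  rw [frob_gradFreg, frob_sub, rowSum_sub]
  simp only [Freg, hrow, hmat, Pi.sub_apply, Matrix.sub_apply]
  ring

lemma hasDerivAt_Freg_line (hp : ∀ i, p i ≠ 0) (hπ : ∀ i j, 0 ≤ π i j)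
    (hD : ∀ i j, π i j = 0 → D i j = 0) :
    HasDerivAt (fun t : ℝ => Freg c p α β (π + t • D)) (frob (gradFreg c p α β π) D) 0 := by
  have hfrob : HasDerivAt (fun t : ℝ => frob c π + t * frob c D) (frob c D) 0 := by
    simpa using ((hasDerivAt_id (0 : ℝ)).mul_const (frob c D)).const_add (frob c π)
  have hrow := hasDerivAt_KLvec_line hp (rowSum_eq_zero_of_support_subset hπ hD)
  have hmat := hasDerivAt_KLmat_line (fun i j => (piRef_pos i j).ne') hD
  rw [frob_gradFreg]
  simp only [Freg, frob_add, frob_smul, rowSum_add, rowSum_smul]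
  exact (hfrob.add (hrow.const_mul α⁻¹)).add (hmat.const_mul β⁻¹)

lemma Freg_convexCombo_le {t : ℝ} (hp : ∀ i, 0 < p i) (hα : 0 ≤ α) (hβ : 0 ≤ β)
    (hπ : ∀ i j, 0 ≤ π i j) (hσ : ∀ i j, 0 ≤ σ i j) (ht : 0 < t) (ht1 : t ≤ 1) :
    Freg c p α β ((1 - t) • π + t • σ) ≤ (1 - t) * Freg c p α β π + t * Freg c p α β σ +
      β⁻¹ * (t * Real.log t * ∑ i, ∑ j, if π i j = 0 then σ i j else 0) := by
  have hrow := (convexOn_KLvec hp).2 (rowSum_nonneg hπ) (rowSum_nonneg hσ) (sub_nonneg.2 ht1)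
    ht.le (sub_add_cancel 1 t)
  have hmat := KLmat_convexCombo_le hπ hσ piRef_pos ht ht1
  simp only [Freg, frob_add, frob_smul, rowSum_add, rowSum_smul]
  linear_combination α⁻¹ * hrow + β⁻¹ * hmat

/- Moving from `π` towards `σ` by `t` raises `Freg` by at most `O(t)` plus `β⁻¹ t log t` times the
mass that `σ` puts outside the support of `π`; the latter dominates as `t → 0`. -/
lemma eq_zero_of_isMinOn_Freg (hp : ∀ i, 0 < p i) (hα : 0 ≤ α) (hβ : 0 < β)
    (hπ : π ∈ GammaStar q) (hmin : IsMinOn (Freg c p α β) (GammaStar q) π)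
    (hσ : σ ∈ GammaStar q) (i : Fin m) (j : Fin n) (hij : π i j = 0) : σ i j = 0 := by
  have hnonneg (i j) : 0 ≤ if π i j = 0 then σ i j else 0 := by
    split_ifs
    exacts [hσ.1 i j, le_rfl]
  set M := ∑ i, ∑ j, if π i j = 0 then σ i j else 0
  have hlog (t : ℝ) (ht : t ∈ Set.Ioo 0 1) :
      β * (Freg c p α β π - Freg c p α β σ) ≤ Real.log t * M := by
    have hcombo := (hmin (convex_GammaStar q hπ hσ (sub_nonneg.2 ht.2.le) ht.1.le
      (sub_add_cancel 1 t))).trans (Freg_convexCombo_le hp hα hβ.le hπ.1 hσ.1 ht.1 ht.2.le)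
    have hdiv : t * (Freg c p α β π - Freg c p α β σ) ≤ t * (β⁻¹ * (Real.log t * M)) := by
      linarith
    exact (le_inv_mul_iff₀ hβ).1 (le_of_mul_le_mul_left hdiv ht.1)
  have hM0 : M = 0 := by
    by_contra hne
    have hpos : 0 < M := lt_of_le_of_ne
      (Finset.sum_nonneg fun i _ => Finset.sum_nonneg fun j _ => hnonneg i j) (Ne.symm hne)
    have hbot := Real.tendsto_log_nhdsGT_zero.atBot_mul_const hpos
    obtain ⟨t, htlt, ht⟩ := ((hbot.eventually_lt_atBot
      (β * (Freg c p α β π - Freg c p α β σ))).and (Ioo_mem_nhdsGT one_pos)).exists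
    exact (hlog t ht).not_gt htlt
  have hrow := (Finset.sum_eq_zero_iff_of_nonneg fun i _ =>
    Finset.sum_nonneg fun j _ => hnonneg i j).1 hM0 i (Finset.mem_univ i)
  simpa [hij] using (Finset.sum_eq_zero_iff_of_nonneg fun j _ => hnonneg i j).1 hrow j
    (Finset.mem_univ j)

lemma col_eq_zero_of_isMinOn_Freg (hp : ∀ i, 0 < p i) (hα : 0 ≤ α) (hβ : 0 < β)
    (hπ : π ∈ GammaStar q) (hmin : IsMinOn (Freg c p α β) (GammaStar q) π)
    {i : Fin m} {j : Fin n} (hij : π i j = 0) (k : Fin m) : π k j = 0 := by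
  simpa using eq_zero_of_isMinOn_Freg hp hα hβ hπ hmin
    (submatrix_mem_GammaStar hπ (Equiv.swap i k)) i j hij

lemma frob_gradFreg_eq_zero_of_isMinOn (hp : ∀ i, p i ≠ 0) (hπ : π ∈ GammaStar q)
    (hmin : IsMinOn (Freg c p α β) (GammaStar q) π)
    (hD : ∀ i j, π i j = 0 → D i j = 0) (hcol : colSum D = 0) :
    frob (gradFreg c p α β π) D = 0 := by
  refine IsLocalMin.hasDerivAt_eq_zero ?_ (hasDerivAt_Freg_line hp hπ.1 hD)
  filter_upwards [eventually_add_smul_mem_GammaStar hπ hD hcol] with t ht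
  simpa using hmin ht

lemma gradFreg_eq_of_isMinOn (hp : ∀ i, p i ≠ 0) (hπ : π ∈ GammaStar q)
    (hmin : IsMinOn (Freg c p α β) (GammaStar q) π)
    {i k : Fin m} {j : Fin n} (hi : π i j ≠ 0) (hk : π k j ≠ 0) :
    gradFreg c p α β π i j = gradFreg c p α β π k j := by
  have htransfer := frob_gradFreg_eq_zero_of_isMinOn
    (D := Matrix.single i j 1 - Matrix.single k j 1) hp hπ hmin
    (fun i' j' h => by
      rw [Matrix.sub_apply, Matrix.single_apply_of_ne, Matrix.single_apply_of_ne, sub_zero] <;>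
        rintro ⟨rfl, rfl⟩ <;> contradiction)
    (by rw [colSum_sub, colSum_single, colSum_single, sub_self])
  rw [frob_sub, frob_single, frob_single, mul_one, mul_one] at htransfer
  exact sub_eq_zero.1 htransfer

lemma eq_mul_gibbs_mul_exp_gradFreg (hβ : β ≠ 0) {i : Fin m} {j : Fin n} (hij : 0 < π i j) :
    π i j = Real.exp (-(β * (α⁻¹ * Real.log (rowSum π i / p i)))) * Real.exp (-(β * c i j))
      * (Real.exp (β * gradFreg c p α β π i j) * piRef m n i j) := by
  have hexponent : -(β * (α⁻¹ * Real.log (rowSum π i / p i))) + -(β * c i j)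
      + β * gradFreg c p α β π i j = Real.log (π i j / piRef m n i j) := by
    rw [gradFreg, mul_add, mul_inv_cancel_left₀ hβ]
    ring
  rw [← mul_assoc, ← Real.exp_add, ← Real.exp_add, hexponent,
    Real.exp_log (div_pos hij (piRef_pos i j)), div_mul_cancel₀ _ (piRef_pos i j).ne']

lemma mem_scalingSet_of_isMinOn_Freg (hp : ∀ i, 0 < p i) (hα : 0 ≤ α) (hβ : 0 < β)
    (hπ : π ∈ GammaStar q) (hmin : IsMinOn (Freg c p α β) (GammaStar q) π) :
    π ∈ scalingSet c β := by
  let a (i : Fin m) : ℝ := Real.exp (-(β * (α⁻¹ * Real.log (rowSum π i / p i))))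
  have hcolumn (j : Fin n) : ∃ b, 0 ≤ b ∧ ∀ i, π i j = a i * Real.exp (-(β * c i j)) * b := by
    by_cases hzero : ∀ k, π k j = 0
    · exact ⟨0, le_rfl, fun i => by rw [hzero i, mul_zero]⟩
    obtain ⟨k, hk⟩ := not_forall.1 hzero
    have hne (i : Fin m) : π i j ≠ 0 :=
      fun hi => hk (col_eq_zero_of_isMinOn_Freg hp hα hβ hπ hmin hi k)
    refine ⟨Real.exp (β * gradFreg c p α β π k j) * piRef m n k j,
      mul_nonneg (Real.exp_pos _).le (piRef_pos k j).le, fun i => ?_⟩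
    rw [← gradFreg_eq_of_isMinOn (fun i => (hp i).ne') hπ hmin (hne i) hk]
    exact eq_mul_gibbs_mul_exp_gradFreg hβ.ne' ((hπ.1 i j).lt_of_ne' (hne i))
  choose b hb hπb using hcolumn
  exact ⟨a, b, fun i => (Real.exp_pos _).le, hb, funext fun i => funext fun j => hπb j i⟩

lemma Freg_eq_add_KL_of_isMinOn (hp : ∀ i, 0 < p i) (hα : 0 ≤ α) (hβ : 0 < β)
    (hπ : π ∈ GammaStar q) (hmin : IsMinOn (Freg c p α β) (GammaStar q) π)
    (hσ : σ ∈ GammaStar q) :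
    Freg c p α β σ =
      Freg c p α β π + α⁻¹ * KLvec (rowSum σ) (rowSum π) + β⁻¹ * KLmat σ π := by
  have hsupp := eq_zero_of_isMinOn_Freg hp hα hβ hπ hmin hσ
  have hstat : frob (gradFreg c p α β π) (σ - π) = 0 :=
    frob_gradFreg_eq_zero_of_isMinOn (fun i => (hp i).ne') hπ hmin
      (fun i j h => by rw [Matrix.sub_apply, hsupp i j h, h, sub_zero])
      (by rw [colSum_sub, hσ.2, hπ.2, sub_self])
  rw [Freg_eq_add_KL (fun i => (hp i).ne') hπ.1 hsupp, hstat, add_zero]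

end RegularizedObjective

theorem online_vs_regularization_path_KL_general
    {m n : ℕ} (p : Fin m → ℝ) (q : Fin n → ℝ) (c : Matrix (Fin m) (Fin n) ℝ)
    (hp : ∀ i, 0 < p i) (α β : ℝ) (hα : 0 < α) (hβ : 0 < β)
    (πonl : Matrix (Fin m) (Fin n) ℝ) (hπonlmem : πonl ∈ GammaStar q)
    (hπonlopt : ∀ π' ∈ scalingSet c β ∩ GammaStar q,
      α * frob c πonl + KLvec (rowSum πonl) p ≤ α * frob c π' + KLvec (rowSum π') p)
    (πreg : Matrix (Fin m) (Fin n) ℝ) (hπregmem : πreg ∈ GammaStar q)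
    (hπregopt : IsMinOn (Freg c p α β) (GammaStar q) πreg) :
    KLvec (rowSum πonl) (rowSum πreg) ≤ (α / β) * ((∑ j, q j) * Real.log (m * n)) := by
  have hscaling := mem_scalingSet_of_isMinOn_Freg hp hα.le hβ hπregmem hπregopt
  have hpythagoras := Freg_eq_add_KL_of_isMinOn hp hα.le hβ hπregmem hπregopt hπonlmem
  have hKL : 0 ≤ KLmat πonl πreg := KLmat_nonneg hπonlmem.1 hπregmem.1
    (eq_zero_of_isMinOn_Freg hp hα.le hβ hπregmem hπregopt hπonlmem)
  calc KLvec (rowSum πonl) (rowSum πreg)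
      = α * (Freg c p α β πonl - Freg c p α β πreg) - α / β * KLmat πonl πreg := by
        rw [hpythagoras]
        field_simp
        ring
    _ ≤ α * (Freg c p α β πonl - Freg c p α β πreg) := sub_le_self _ (by positivity)
    _ = (α * frob c πonl + KLvec (rowSum πonl) p) - (α * frob c πreg + KLvec (rowSum πreg) p)
          + α / β * (KLmat πonl (piRef m n) - KLmat πreg (piRef m n)) := by
        simp only [Freg]
        field_simp
        ring
    _ ≤ α / β * (KLmat πonl (piRef m n) - KLmat πreg (piRef m n)) := by
        linarith [hπonlopt πreg ⟨hscaling, hπregmem⟩]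
    _ ≤ (α / β) * ((∑ j, q j) * Real.log (m * n)) := by
        gcongr
        exact KLmat_piRef_sub_KLmat_piRef_le hπonlmem hπregmem

/-- key estimate in the proof of Proposition 1.
`KL(π^onl 𝟙 | π^reg 𝟙) ≤ (α/β) log(mn)`. -/
theorem online_vs_regularization_path_KL
    {m n : ℕ} (p : Fin m → ℝ) (q : Fin n → ℝ) (c : Matrix (Fin m) (Fin n) ℝ)
    (hp : p ∈ simplexPos m) (hq : q ∈ simplexPos n)
    (α β : ℝ) (hα : 0 < α) (hβ : 0 < β)
    (πonl : Matrix (Fin m) (Fin n) ℝ)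
    (hπonlmem : πonl ∈ scalingSet c β ∩ GammaStar q)
    (hπonlopt : ∀ π' ∈ scalingSet c β ∩ GammaStar q,
      α * frob c πonl + KLvec (rowSum πonl) p ≤ α * frob c π' + KLvec (rowSum π') p)
    (πreg : Matrix (Fin m) (Fin n) ℝ)
    (hπregmem : πreg ∈ GammaStar q)
    (hπregopt : ∀ π' ∈ GammaStar (m := m) q, Freg c p α β πreg ≤ Freg c p α β π') :
    KLvec (rowSum πonl) (rowSum πreg) ≤ (α / β) * Real.log (m * n) := by
  have h := online_vs_regularization_path_KL_general p q c hp.1 α β hα hβ πonl hπonlmem.2 hπonlopt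
    πreg hπregmem hπregopt
  rwa [hq.2, one_mul] at h

end
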